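/- Let f ∈ A₁(c). Then for every x ∈ (−1,1): −2·f′(x)/(1+x) ≤ f″(x) ≤ 2·f′(x)/(1−x). -/

import Mathlib

open Set Complex

noncomputable section

/-- The doubly-slit plane `ℂ(J)` for `J ⊆ ℝ`. -/
def CSlit (J : Set ℝ) : Set ℂ := {z : ℂ | z.im ≠ 0 ∨ z.re ∈ J}

/-- `ℂ₁ = ℂ((−1,1))`. -/
def C1 : Set ℂ := CSlit (Set.Ioo (-1 : ℝ) 1)

/-- The class `A₁(c)` of normalized Herglotz functions. -/
structure MemA1 (c₁ c₂ c₃ c₄ : ℝ) (f : ℂ → ℂ) : Prop where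
  holo : DifferentiableOn ℂ f C1
  maps : Set.MapsTo f C1 C1
  symm : ∀ z ∈ C1, f (starRingEnd ℂ z) = starRingEnd ℂ (f z)
  upper : ∀ z ∈ C1, 0 < z.im → 0 ≤ (f z).im
  lower : ∀ z ∈ C1, z.im < 0 → (f z).im ≤ 0
  val1 : f (c₁ : ℂ) = (c₃ : ℂ)
  val2 : f (c₂ : ℂ) = (c₄ : ℂ)

/-!
Let `x ∈ (a, b)`. The Koebe-type map `z ↦ 4uvz / (u(1 + z)² + v(1 - z)²)`, with `u = x - a` and
`v = b - x`, carries the unit disc onto `ℂ((-u, v))` and preserves the sign of the imaginary part.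
Composing it with `f(x + ·)` gives a typically real function `g` on the disc: `Im g(z)` and `Im z`
never have opposite signs. The Taylor coefficient `Re gₙ` is the `n`-th Fourier sine coefficient of
`Im g` on circles, so `|sin nθ| ≤ n |sin θ|` yields Rogosinski's bound `|Re gₙ| ≤ n Re g₁`. For
`n = 2` this reads `|uv f″(x) + (v - u) f′(x)| ≤ (u + v) f′(x)`, which is the pair of claimed
inequalities multiplied by `uv`.
-/

open Metric Filter Topology

lemma abs_sin_nat_mul_le (n : ℕ) (θ : ℝ) : |Real.sin (n * θ)| ≤ n * |Real.sin θ| := by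
  induction n with
  | zero => simp
  | succ n ih =>
    calc |Real.sin ((n + 1 : ℕ) * θ)|
        = |Real.sin (n * θ) * Real.cos θ + Real.cos (n * θ) * Real.sin θ| := by
          rw [← Real.sin_add]; push_cast; ring_nf
      _ ≤ |Real.sin (n * θ)| * |Real.cos θ| + |Real.cos (n * θ)| * |Real.sin θ| := by
          rw [← abs_mul, ← abs_mul]; exact abs_add_le _ _
      _ ≤ |Real.sin (n * θ)| * 1 + 1 * |Real.sin θ| := by
          gcongr <;> exact Real.abs_cos_le_one _
      _ ≤ (n + 1 : ℕ) * |Real.sin θ| := by push_cast; linarith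

lemma sin_nat_mul_eq_circleMap_pow {r : ℝ} (hr : r ≠ 0) (n : ℕ) (θ : ℝ) :
    (Real.sin (n * θ) : ℂ) =
      I / 2 * (r ^ n / circleMap 0 r θ ^ n - circleMap 0 r θ ^ n / r ^ n) := by
  have hrC : (r : ℂ) ≠ 0 := ofReal_ne_zero.2 hr
  have hexp : exp (n * θ * I) = exp (θ * I) ^ n := by rw [mul_assoc, exp_nat_mul]
  simp only [circleMap, zero_add, mul_pow, ofReal_sin, ofReal_mul, ofReal_natCast, Complex.sin,
    neg_mul, exp_neg, hexp]
  field_simp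

section FourierCoefficients

variable {g : ℂ → ℂ} {c : ℂ} {r : ℝ}

lemma integral_div_circleMap_pow (hr : 0 < r) (hg : DiffContOnCl ℂ g (ball c r)) (n : ℕ) :
    ∫ θ in (0)..2 * Real.pi, g (circleMap c r θ) / circleMap 0 r θ ^ n =
      2 * Real.pi / n.factorial * iteratedDeriv n g c := by
  have hintegrand (θ : ℝ) : deriv (circleMap c r) θ •
      ((1 / (circleMap c r θ - c) ^ (n + 1)) • g (circleMap c r θ)) =
        I * (g (circleMap c r θ) / circleMap 0 r θ ^ n) := by
    have hne : circleMap 0 r θ ≠ 0 := circleMap_ne_center hr.ne'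
    simp only [deriv_circleMap, circleMap_sub_center, smul_eq_mul, pow_succ]
    field_simp
  have hcauchy := hg.circleIntegral_one_div_sub_center_pow_smul hr n
  simp only [circleIntegral, hintegrand, intervalIntegral.integral_const_mul] at hcauchy
  refine mul_left_cancel₀ I_ne_zero (hcauchy.trans ?_)
  rw [smul_eq_mul]
  ring

lemma integral_mul_circleMap_pow_eq_zero (hr : 0 ≤ r) (hg : DiffContOnCl ℂ g (ball c r)) {n : ℕ}
    (hn : n ≠ 0) :
    ∫ θ in (0)..2 * Real.pi, g (circleMap c r θ) * circleMap 0 r θ ^ n = 0 := by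
  obtain ⟨m, rfl⟩ := Nat.exists_eq_succ_of_ne_zero hn
  have hpow : Differentiable ℂ fun z : ℂ => (z - c) ^ m := by fun_prop
  have hcauchy := (hpow.diffContOnCl.smul hg).circleIntegral_eq_zero hr
  have hintegrand (θ : ℝ) : deriv (circleMap c r) θ •
      ((circleMap c r θ - c) ^ m • g (circleMap c r θ)) =
        I * (g (circleMap c r θ) * circleMap 0 r θ ^ (m + 1)) := by
    simp only [deriv_circleMap, circleMap_sub_center, smul_eq_mul]
    ring
  simpa only [circleIntegral, Pi.smul_apply', hintegrand, intervalIntegral.integral_const_mul,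
    mul_eq_zero, I_ne_zero, false_or] using hcauchy

lemma continuous_comp_circleMap (hr : 0 ≤ r) (hg : DiffContOnCl ℂ g (ball c r)) :
    Continuous fun θ : ℝ => g (circleMap c r θ) :=
  hg.continuousOn_ball.comp_continuous (continuous_circleMap c r)
    (circleMap_mem_closedBall c hr)

lemma integral_sin_mul_circleMap (hr : 0 < r) (hg : DiffContOnCl ℂ g (ball c r)) {n : ℕ}
    (hn : n ≠ 0) :
    ∫ θ in (0)..2 * Real.pi, (Real.sin (n * θ) : ℂ) * g (circleMap c r θ) =
      (Real.pi * r ^ n / n.factorial : ℝ) * (I * iteratedDeriv n g c) := by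
  have hcont := continuous_comp_circleMap hr.le hg
  have hne (θ : ℝ) : circleMap 0 r θ ^ n ≠ 0 := pow_ne_zero n (circleMap_ne_center hr.ne')
  have hdiv : Continuous fun θ : ℝ => g (circleMap c r θ) / circleMap 0 r θ ^ n :=
    hcont.div ((continuous_circleMap 0 r).pow n) hne
  have hmul : Continuous fun θ : ℝ => g (circleMap c r θ) * circleMap 0 r θ ^ n :=
    hcont.mul ((continuous_circleMap 0 r).pow n)
  calc ∫ θ in (0)..2 * Real.pi, (Real.sin (n * θ) : ℂ) * g (circleMap c r θ)
      = ∫ θ in (0)..2 * Real.pi,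
          (I / 2 * r ^ n * (g (circleMap c r θ) / circleMap 0 r θ ^ n) -
            I / 2 / r ^ n * (g (circleMap c r θ) * circleMap 0 r θ ^ n)) := by
        congr 1 with θ
        rw [sin_nat_mul_eq_circleMap_pow hr.ne']
        ring
    _ = I / 2 * r ^ n * (2 * Real.pi / n.factorial * iteratedDeriv n g c) := by
        rw [intervalIntegral.integral_sub ((hdiv.const_mul _).intervalIntegrable _ _)
            ((hmul.const_mul _).intervalIntegrable _ _),
          intervalIntegral.integral_const_mul, intervalIntegral.integral_const_mul,
          integral_div_circleMap_pow hr hg, integral_mul_circleMap_pow_eq_zero hr.le hg hn,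
          mul_zero, sub_zero]
    _ = (Real.pi * r ^ n / n.factorial : ℝ) * (I * iteratedDeriv n g c) := by
        push_cast
        ring

lemma integral_sin_mul_im_circleMap (hr : 0 < r) (hg : DiffContOnCl ℂ g (ball c r)) {n : ℕ}
    (hn : n ≠ 0) :
    ∫ θ in (0)..2 * Real.pi, Real.sin (n * θ) * (g (circleMap c r θ)).im =
      Real.pi * r ^ n / n.factorial * (iteratedDeriv n g c).re := by
  have hcont : Continuous fun θ : ℝ => (Real.sin (n * θ) : ℂ) * g (circleMap c r θ) :=
    (by fun_prop : Continuous fun θ : ℝ => (Real.sin (n * θ) : ℂ)).mul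
      (continuous_comp_circleMap hr.le hg)
  have him := imCLM.intervalIntegral_comp_comm
    (hcont.intervalIntegrable (μ := MeasureTheory.volume) 0 (2 * Real.pi))
  simpa only [imCLM_apply, im_ofReal_mul, I_mul_im, integral_sin_mul_circleMap hr hg hn] using him

end FourierCoefficients

section TypicallyReal

variable {g : ℂ → ℂ} {c : ℂ} {r : ℝ} {n : ℕ}

lemma abs_re_iteratedDeriv_le_of_im_mul_im_nonneg_on_sphere (hr : 0 < r)
    (hg : DiffContOnCl ℂ g (ball c r))
    (him : ∀ z ∈ sphere c r, 0 ≤ (z - c).im * (g z).im) (hn : n ≠ 0) :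
    r ^ n / n.factorial * |(iteratedDeriv n g c).re| ≤ n * (r * (deriv g c).re) := by
  have hsin (θ : ℝ) : 0 ≤ Real.sin θ * (g (circleMap c r θ)).im := by
    have h := him _ (circleMap_mem_sphere c hr.le θ)
    rw [circleMap_sub_center, circleMap_zero, im_ofReal_mul, exp_ofReal_mul_I_im, mul_assoc] at h
    exact nonneg_of_mul_nonneg_right h hr
  have hpointwise (θ : ℝ) : |Real.sin (n * θ) * (g (circleMap c r θ)).im| ≤
      n * (Real.sin θ * (g (circleMap c r θ)).im) := by
    rw [← abs_of_nonneg (hsin θ), abs_mul, abs_mul, ← mul_assoc]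
    gcongr
    exact abs_sin_nat_mul_le n θ
  have hcont : Continuous fun θ : ℝ => (g (circleMap c r θ)).im :=
    continuous_im.comp (continuous_comp_circleMap hr.le hg)
  have hintegral : |∫ θ in (0)..2 * Real.pi, Real.sin (n * θ) * (g (circleMap c r θ)).im| ≤
      ∫ θ in (0)..2 * Real.pi, n * (Real.sin θ * (g (circleMap c r θ)).im) := by
    refine (intervalIntegral.abs_integral_le_integral_abs Real.two_pi_pos.le).trans ?_
    refine intervalIntegral.integral_mono_on Real.two_pi_pos.le ?_ ?_ fun θ _ => hpointwise θ
    all_goals exact Continuous.intervalIntegrable (by fun_prop) _ _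
  have hfirst := integral_sin_mul_im_circleMap hr hg one_ne_zero
  simp only [Nat.cast_one, one_mul, pow_one, Nat.factorial_one, div_one, iteratedDeriv_one]
    at hfirst
  rw [integral_sin_mul_im_circleMap hr hg hn, intervalIntegral.integral_const_mul, hfirst,
    abs_mul, abs_of_nonneg (by positivity)] at hintegral
  refine le_of_mul_le_mul_left ?_ Real.pi_pos
  calc Real.pi * (r ^ n / n.factorial * |(iteratedDeriv n g c).re|)
      = Real.pi * r ^ n / n.factorial * |(iteratedDeriv n g c).re| := by ring
    _ ≤ n * (Real.pi * r * (deriv g c).re) := hintegral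
    _ = Real.pi * (n * (r * (deriv g c).re)) := by ring

lemma abs_re_iteratedDeriv_le_of_im_mul_im_nonneg_on_ball (hr : 0 < r)
    (hg : DifferentiableOn ℂ g (ball c r))
    (him : ∀ z ∈ ball c r, 0 ≤ (z - c).im * (g z).im) (hn : n ≠ 0) :
    r ^ n / n.factorial * |(iteratedDeriv n g c).re| ≤ n * (r * (deriv g c).re) := by
  have hinner : ∀ s ∈ Ioo 0 r,
      s ^ n / n.factorial * |(iteratedDeriv n g c).re| ≤ n * (s * (deriv g c).re) := by
    intro s hs
    have hsub : closedBall c s ⊆ ball c r := closedBall_subset_ball hs.2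
    exact abs_re_iteratedDeriv_le_of_im_mul_im_nonneg_on_sphere hs.1
      (hg.mono (closure_ball_subset_closedBall.trans hsub)).diffContOnCl
      (fun z hz => him z (hsub (sphere_subset_closedBall hz))) hn
  have hleft : Tendsto (fun s : ℝ => s ^ n / n.factorial * |(iteratedDeriv n g c).re|)
      (𝓝[<] r) (𝓝 (r ^ n / n.factorial * |(iteratedDeriv n g c).re|)) :=
    (Continuous.tendsto (by fun_prop) r).mono_left nhdsWithin_le_nhds
  have hright : Tendsto (fun s : ℝ => n * (s * (deriv g c).re))
      (𝓝[<] r) (𝓝 (n * (r * (deriv g c).re))) :=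
    (Continuous.tendsto (by fun_prop) r).mono_left nhdsWithin_le_nhds
  exact le_of_tendsto_of_tendsto hleft hright (mem_of_superset (Ioo_mem_nhdsLT hr) hinner)

end TypicallyReal

/-- The denominator of `slitMap u v`. -/
def slitDenom (u v : ℝ) (z : ℂ) : ℂ := u * (1 + z) ^ 2 + v * (1 - z) ^ 2

/-- The conformal map of the unit disc onto the doubly slit plane `ℂ((-u, v))` fixing `0`; it sends
`-1` and `1` to the tips `-u` and `v` of the slits. -/
def slitMap (u v : ℝ) (z : ℂ) : ℂ := 4 * u * v * z / slitDenom u v z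

section SlitMap

variable {u v : ℝ} {z : ℂ}

lemma slitMap_zero : slitMap u v 0 = 0 := by simp [slitMap]

lemma re_sq_add_im_sq_lt_one (hz : z ∈ ball (0 : ℂ) 1) : z.re ^ 2 + z.im ^ 2 < 1 := by
  rw [mem_ball_zero_iff, ← sq_lt_one_iff₀ (norm_nonneg z), Complex.sq_norm, normSq_apply] at hz
  linarith

lemma slitDenom_ofReal_pos (hu : 0 ≤ u) (hv : 0 < v) {s : ℝ} (hs : s < 1) :
    0 < u * (1 + s) ^ 2 + v * (1 - s) ^ 2 := by
  have : 0 < 1 - s := sub_pos.2 hs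
  positivity

lemma slitDenom_ne_zero (hu : 0 < u) (hv : 0 < v) (hz : z ∈ ball (0 : ℂ) 1) :
    slitDenom u v z ≠ 0 := by
  intro h
  have hnorm := re_sq_add_im_sq_lt_one hz
  have hre := congrArg Complex.re h
  have him := congrArg Complex.im h
  simp only [slitDenom, pow_two, add_re, add_im, sub_re, sub_im, mul_re, mul_im, one_re, one_im,
    ofReal_re, ofReal_im, zero_re, zero_im] at hre him
  have hfactor : z.im * ((u + v) * z.re + (u - v)) = 0 := by linear_combination him / 2
  rcases mul_eq_zero.1 hfactor with hreal | hcrit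
  · have hlt : z.re < 1 := by nlinarith
    have hpos := slitDenom_ofReal_pos hu.le hv hlt
    rw [hreal] at hre
    linarith
  · have : (u + v) * (1 - (z.re ^ 2 + z.im ^ 2)) = 0 := by
      linear_combination hre - 2 * z.re * hcrit
    have : 0 < (u + v) * (1 - (z.re ^ 2 + z.im ^ 2)) := mul_pos (by linarith) (by linarith)
    linarith

lemma im_slitMap :
    (slitMap u v z).im =
      4 * u * v * (u + v) * (1 - (z.re ^ 2 + z.im ^ 2)) / normSq (slitDenom u v z) * z.im := by
  have hnum : (4 * u * v * z : ℂ) = ((4 * u * v : ℝ) : ℂ) * z := by push_cast; rfl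
  rw [slitMap, hnum, mul_div_assoc, im_ofReal_mul, div_im, ← sub_div, mul_div_assoc',
    div_mul_eq_mul_div]
  congr 1
  simp only [slitDenom, pow_two, add_re, add_im, sub_re, sub_im, mul_re, mul_im, one_re, one_im,
    ofReal_re, ofReal_im]
  ring

lemma exists_pos_im_slitMap_eq (hu : 0 < u) (hv : 0 < v) (hz : z ∈ ball (0 : ℂ) 1) :
    ∃ k > 0, (slitMap u v z).im = k * z.im := by
  have hnorm : 0 < 1 - (z.re ^ 2 + z.im ^ 2) := sub_pos.2 (re_sq_add_im_sq_lt_one hz)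
  have hdenom : 0 < normSq (slitDenom u v z) := normSq_pos.2 (slitDenom_ne_zero hu hv hz)
  exact ⟨_, by positivity, im_slitMap⟩

lemma re_slitMap_ofReal_mem_Ioo (hu : 0 < u) (hv : 0 < v) {s : ℝ} (hs : s ∈ Ioo (-1) 1) :
    (slitMap u v s).re ∈ Ioo (-u) v := by
  obtain ⟨hs₁, hs₂⟩ := hs
  have hdenom := slitDenom_ofReal_pos hu.le hv hs₂
  have hcast : slitMap u v s =
      ((4 * u * v * s / (u * (1 + s) ^ 2 + v * (1 - s) ^ 2) : ℝ) : ℂ) := by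
    simp [slitMap, slitDenom]
  have hsq₁ : 0 < u * (u + v) * (1 + s) ^ 2 := by
    have : 0 < 1 + s := by linarith
    positivity
  have hsq₂ : 0 < v * (u + v) * (1 - s) ^ 2 := by
    have : 0 < 1 - s := by linarith
    positivity
  rw [hcast, ofReal_re, mem_Ioo, lt_div_iff₀ hdenom, div_lt_iff₀ hdenom]
  constructor <;> linarith

lemma mapsTo_slitMap (hu : 0 < u) (hv : 0 < v) :
    MapsTo (slitMap u v) (ball 0 1) (CSlit (Ioo (-u) v)) := by
  intro z hz
  obtain ⟨k, hk, him⟩ := exists_pos_im_slitMap_eq hu hv hz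
  rcases eq_or_ne z.im 0 with hreal | hnonreal
  · right
    obtain ⟨s, rfl⟩ : ∃ s : ℝ, (s : ℂ) = z := ⟨z.re, by simp [Complex.ext_iff, hreal]⟩
    have hs : |s| < 1 := by simpa using hz
    exact re_slitMap_ofReal_mem_Ioo hu hv (abs_lt.1 hs)
  · left
    rw [him]
    exact mul_ne_zero hk.ne' hnonreal

lemma hasDerivAt_slitDenom (z : ℂ) :
    HasDerivAt (slitDenom u v) (2 * u * (1 + z) - 2 * v * (1 - z)) z := by
  have hplus := (((hasDerivAt_id' z).const_add 1).pow 2).const_mul (u : ℂ)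
  have hminus := (((hasDerivAt_id' z).const_sub 1).pow 2).const_mul (v : ℂ)
  refine (hplus.add hminus).congr_deriv ?_
  push_cast
  ring

lemma hasDerivAt_slitMap (hz : slitDenom u v z ≠ 0) :
    HasDerivAt (slitMap u v) (4 * u * v * (u + v) * (1 - z ^ 2) / slitDenom u v z ^ 2) z := by
  have hnum := (hasDerivAt_id' z).const_mul (4 * u * v : ℂ)
  refine (hnum.div (hasDerivAt_slitDenom z) hz).congr_deriv ?_
  congr 1
  rw [slitDenom]
  ring

lemma differentiableOn_slitMap (hu : 0 < u) (hv : 0 < v) :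
    DifferentiableOn ℂ (slitMap u v) (ball 0 1) := fun _ hz =>
  (hasDerivAt_slitMap (slitDenom_ne_zero hu hv hz)).differentiableAt.differentiableWithinAt

lemma slitDenom_zero : slitDenom u v 0 = u + v := by simp [slitDenom]

lemma deriv_slitMap_zero (huv : u + v ≠ 0) :
    deriv (slitMap u v) 0 = (4 * u * v / (u + v) : ℝ) := by
  have huvC : (u + v : ℂ) ≠ 0 := mod_cast huv
  rw [(hasDerivAt_slitMap (by rwa [slitDenom_zero])).deriv, slitDenom_zero]
  push_cast
  field_simp
  ring

lemma iteratedDeriv_two_slitMap_zero (huv : u + v ≠ 0) :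
    iteratedDeriv 2 (slitMap u v) 0 = (16 * u * v * (v - u) / (u + v) ^ 2 : ℝ) := by
  have huvC : (u + v : ℂ) ≠ 0 := mod_cast huv
  have hdenom : slitDenom u v 0 ≠ 0 := by rwa [slitDenom_zero]
  have hderiv : deriv (slitMap u v) =ᶠ[𝓝 0]
      fun z => 4 * u * v * (u + v) * (1 - z ^ 2) / slitDenom u v z ^ 2 := by
    filter_upwards [(hasDerivAt_slitDenom 0).continuousAt.eventually_ne hdenom] with z hz
      using (hasDerivAt_slitMap hz).deriv
  have hnum := ((hasDerivAt_pow 2 (0 : ℂ)).const_sub 1).const_mul (4 * u * v * (u + v) : ℂ)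
  rw [iteratedDeriv_succ, iteratedDeriv_one, hderiv.deriv_eq]
  refine (hnum.div ((hasDerivAt_slitDenom 0).fun_pow 2) (pow_ne_zero 2 hdenom)).deriv.trans ?_
  simp only [slitDenom_zero]
  push_cast
  field_simp
  ring

end SlitMap

section Herglotz

variable {f : ℂ → ℂ}

lemma isOpen_CSlit {J : Set ℝ} (hJ : IsOpen J) : IsOpen (CSlit J) :=
  (isOpen_ne_fun continuous_im continuous_const).union (hJ.preimage continuous_re)

lemma im_mul_im_comp_slitMap_nonneg {u v : ℝ} (hu : 0 < u) (hv : 0 < v)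
    (him : ∀ w, 0 ≤ w.im * (f w).im) {z : ℂ} (hz : z ∈ ball (0 : ℂ) 1) :
    0 ≤ z.im * (f (slitMap u v z)).im := by
  obtain ⟨k, hk, hkz⟩ := exists_pos_im_slitMap_eq hu hv hz
  have h := him (slitMap u v z)
  rw [hkz, mul_assoc] at h
  exact nonneg_of_mul_nonneg_right h hk

lemma abs_re_iteratedDeriv_two_comp_slitMap_le {u v : ℝ} (hu : 0 < u) (hv : 0 < v)
    (hf : DifferentiableOn ℂ f (CSlit (Ioo (-u) v))) (him : ∀ z, 0 ≤ z.im * (f z).im) :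
    |(iteratedDeriv 2 (f ∘ slitMap u v) 0).re| ≤ 4 * (deriv (f ∘ slitMap u v) 0).re := by
  have h := abs_re_iteratedDeriv_le_of_im_mul_im_nonneg_on_ball one_pos
    (hf.comp (differentiableOn_slitMap hu hv) (mapsTo_slitMap hu hv))
    (fun z hz => by simpa using im_mul_im_comp_slitMap_nonneg hu hv him hz) two_ne_zero
  simp only [one_pow, Nat.factorial_two, Nat.cast_ofNat, one_mul] at h
  linarith

lemma abs_re_iteratedDeriv_two_zero_le {u v : ℝ} (hu : 0 < u) (hv : 0 < v)
    (hf : DifferentiableOn ℂ f (CSlit (Ioo (-u) v))) (him : ∀ z, 0 ≤ z.im * (f z).im) :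
    |u * v * (iteratedDeriv 2 f 0).re + (v - u) * (deriv f 0).re| ≤ (u + v) * (deriv f 0).re := by
  have huv : u + v ≠ 0 := (add_pos hu hv).ne'
  have hf_analytic : AnalyticAt ℂ f (slitMap u v 0) :=
    hf.analyticAt ((isOpen_CSlit isOpen_Ioo).mem_nhds
      (mapsTo_slitMap hu hv (mem_ball_self one_pos)))
  have hslit_analytic : AnalyticAt ℂ (slitMap u v) 0 :=
    (differentiableOn_slitMap hu hv).analyticAt (ball_mem_nhds 0 one_pos)
  have hcoeff := abs_re_iteratedDeriv_two_comp_slitMap_le hu hv hf him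
  rw [iteratedDeriv_comp_two hf_analytic.contDiffAt hslit_analytic.contDiffAt,
    deriv_comp 0 hf_analytic.differentiableAt hslit_analytic.differentiableAt, slitMap_zero,
    deriv_slitMap_zero huv, iteratedDeriv_two_slitMap_zero huv, ← ofReal_pow, add_re,
    re_mul_ofReal, re_mul_ofReal, re_mul_ofReal] at hcoeff
  have hscale : 0 < 16 * u * v / (u + v) ^ 2 := by positivity
  have hsecond (A B : ℝ) : B * (4 * u * v / (u + v)) ^ 2 +
      A * (16 * u * v * (v - u) / (u + v) ^ 2) =
        16 * u * v / (u + v) ^ 2 * (u * v * B + (v - u) * A) := by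
    field_simp
    ring
  have hfirst (A : ℝ) : 4 * (A * (4 * u * v / (u + v))) =
      16 * u * v / (u + v) ^ 2 * ((u + v) * A) := by
    field_simp
    ring
  rw [hsecond, hfirst, abs_mul, abs_of_pos hscale] at hcoeff
  exact le_of_mul_le_mul_left hcoeff hscale

lemma re_iteratedDeriv_two_zero_bounds {u v : ℝ} (hu : 0 < u) (hv : 0 < v)
    (hf : DifferentiableOn ℂ f (CSlit (Ioo (-u) v))) (him : ∀ z, 0 ≤ z.im * (f z).im) :
    -2 * (deriv f 0).re / u ≤ (iteratedDeriv 2 f 0).re ∧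
      (iteratedDeriv 2 f 0).re ≤ 2 * (deriv f 0).re / v := by
  obtain ⟨hlower, hupper⟩ := abs_le.1 (abs_re_iteratedDeriv_two_zero_le hu hv hf him)
  rw [div_le_iff₀ hu, le_div_iff₀ hv]
  exact ⟨le_of_mul_le_mul_left (by linarith) hv, le_of_mul_le_mul_left (by linarith) hu⟩

lemma re_iteratedDeriv_two_bounds {a b : ℝ} (hf : DifferentiableOn ℂ f (CSlit (Ioo a b)))
    (him : ∀ z, 0 ≤ z.im * (f z).im) {x : ℝ} (hx : x ∈ Ioo a b) :
    -2 * (deriv f x).re / (x - a) ≤ (iteratedDeriv 2 f x).re ∧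
      (iteratedDeriv 2 f x).re ≤ 2 * (deriv f x).re / (b - x) := by
  have hshift : MapsTo (fun z : ℂ => x + z) (CSlit (Ioo (-(x - a)) (b - x)))
      (CSlit (Ioo a b)) := by
    rintro z (hz | ⟨hz₁, hz₂⟩)
    · exact Or.inl (by simpa using hz)
    · refine Or.inr ⟨?_, ?_⟩ <;> rw [add_re, ofReal_re] <;> linarith
  have hbounds := re_iteratedDeriv_two_zero_bounds (f := fun z => f (x + z))
    (sub_pos.2 hx.1) (sub_pos.2 hx.2) (hf.comp (by fun_prop) hshift)
    (fun z => by simpa using him (x + z))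
  simpa only [iteratedDeriv_comp_const_add, deriv_comp_const_add, add_zero] using hbounds

lemma iteratedDeriv_re_comp_ofReal (n : ℕ) {x : ℝ} (hf : AnalyticAt ℂ f x) :
    iteratedDeriv n (fun y : ℝ => (f y).re) x = (iteratedDeriv n f x).re := by
  induction n generalizing x with
  | zero => simp
  | succ n ih =>
    have hnear : iteratedDeriv n (fun y : ℝ => (f y).re) =ᶠ[𝓝 x]
        fun y : ℝ => (iteratedDeriv n f y).re :=
      (continuous_ofReal.continuousAt.eventually hf.eventually_analyticAt).mono fun y hy => ih hy
    rw [iteratedDeriv_succ, iteratedDeriv_succ, hnear.deriv_eq]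
    have hanalytic : AnalyticAt ℂ (iteratedDeriv n f) x := by
      simpa only [iteratedDeriv_eq_iterate] using hf.iterated_deriv n
    exact hanalytic.differentiableAt.hasDerivAt.real_of_complex.deriv

end Herglotz

theorem stmt7_general {a b : ℝ} {f : ℂ → ℂ} (hf : DifferentiableOn ℂ f (CSlit (Ioo a b)))
    (hupper : ∀ z, 0 < z.im → 0 ≤ (f z).im) (hlower : ∀ z, z.im < 0 → (f z).im ≤ 0)
    {x : ℝ} (hx : x ∈ Ioo a b) :
    -2 * deriv (fun y : ℝ => (f y).re) x / (x - a) ≤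
        deriv (deriv (fun y : ℝ => (f y).re)) x ∧
      deriv (deriv (fun y : ℝ => (f y).re)) x ≤
        2 * deriv (fun y : ℝ => (f y).re) x / (b - x) := by
  have him (z : ℂ) : 0 ≤ z.im * (f z).im := by
    rcases lt_trichotomy z.im 0 with hz | hz | hz
    · exact mul_nonneg_of_nonpos_of_nonpos hz.le (hlower z hz)
    · simp [hz]
    · exact mul_nonneg hz.le (hupper z hz)
  have hanalytic : AnalyticAt ℂ f x :=
    hf.analyticAt ((isOpen_CSlit isOpen_Ioo).mem_nhds (Or.inr hx))
  have hfirst := iteratedDeriv_re_comp_ofReal 1 hanalytic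
  have hsecond := iteratedDeriv_re_comp_ofReal 2 hanalytic
  rw [iteratedDeriv_one, iteratedDeriv_one] at hfirst
  rw [iteratedDeriv_succ, iteratedDeriv_one] at hsecond
  rw [hfirst, hsecond]
  exact re_iteratedDeriv_two_bounds hf him hx

theorem stmt7 (c₁ c₂ c₃ c₄ : ℝ)
    (h1 : -1 < c₁) (h12 : c₁ < c₂) (h2 : c₂ < 1)
    (h3 : -1 < c₃) (h34 : c₃ < c₄) (h4 : c₄ < 1)
    (f : ℂ → ℂ) (hf : MemA1 c₁ c₂ c₃ c₄ f) :
    ∀ x ∈ Set.Ioo (-1 : ℝ) 1,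
      -2 * deriv (fun y : ℝ => (f y).re) x / (1 + x) ≤
          deriv (deriv (fun y : ℝ => (f y).re)) x ∧
        deriv (deriv (fun y : ℝ => (f y).re)) x ≤
          2 * deriv (fun y : ℝ => (f y).re) x / (1 - x) := by
  intro x hx
  simpa only [sub_neg_eq_add, add_comm x] using stmt7_general hf.holo
    (fun z hz => hf.upper z (Or.inl hz.ne') hz) (fun z hz => hf.lower z (Or.inl hz.ne) hz) hx
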